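/- For every d×d positive semidefinite complex matrices A_1, …, A_m, the matrix Z_p := (A_1^{p/2} A_2^{p/2} ⋯ A_{m-1}^{p/2} A_m^p A_{m-1}^{p/2} ⋯ A_2^{p/2} A_1^{p/2})^{1/p} converges as p → ∞. -/

import Mathlib

open Matrix Filter Topology Finset
open scoped ComplexOrder

/-- Functional-calculus power of a (Hermitian, in practice positive semidefinite)
matrix, with the convention `0 ^ r = 0` for `r > 0`. -/
noncomputable def psdPow {d : ℕ} (A : Matrix (Fin d) (Fin d) ℂ) (r : ℝ) :
    Matrix (Fin d) (Fin d) ℂ :=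
  if hA : A.IsHermitian then
    (hA.eigenvectorUnitary : Matrix (Fin d) (Fin d) ℂ) *
      Matrix.diagonal (fun i => ((hA.eigenvalues i ^ r : ℝ) : ℂ)) *
      star (hA.eigenvectorUnitary : Matrix (Fin d) (Fin d) ℂ)
  else 0

/-- The eigenvalues of a Hermitian matrix, sorted in decreasing order
(with multiplicities). -/
noncomputable def eigsDesc {d : ℕ} (A : Matrix (Fin d) (Fin d) ℂ) : Fin d → ℝ :=
  if hA : A.IsHermitian then
    fun i => hA.eigenvalues (Tuple.sort hA.eigenvalues i.rev)
  else 0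

/-- For `n + 1` matrices `A_0, …, A_n`, this is
`Z_p = (A_0^{p/2} A_1^{p/2} ⋯ A_{n-1}^{p/2} A_n^p A_{n-1}^{p/2} ⋯ A_1^{p/2} A_0^{p/2})^{1/p}`. -/
noncomputable def ZmatM {d n : ℕ} (A : Fin (n + 1) → Matrix (Fin d) (Fin d) ℂ)
    (p : ℝ) : Matrix (Fin d) (Fin d) ℂ :=
  psdPow ((List.ofFn fun l : Fin n => psdPow (A l.castSucc) (p / 2)).prod *
    psdPow (A (Fin.last n)) p *
    ((List.ofFn fun l : Fin n => psdPow (A l.castSucc) (p / 2)).reverse).prod) (1 / p)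

/-!
For `x ≥ 0` and `p > 1`, substituting `s = x ^ (1 / p) * t` gives
`∫ s in Ioi 0, x / (s ^ p + x) = c_p * x ^ (1 / p)` with `c_p = ∫ t in Ioi 0, (1 + t ^ p)⁻¹`, and
`c_p → 1` as `p → ∞`. Through the functional calculus, the convergence of `Y_p ^ (1 / p)` follows by
dominated convergence from that of `Y_p (s ^ p + Y_p)⁻¹` for each fixed `s > 0`. Here `Y_p` is the
product of powers under the `p`-th root, so by Cramer's rule the entries of `Y_p (s ^ p + Y_p)⁻¹`
are ratios of exponential sums `∑ c_b b ^ p`. They are bounded, since `Y_p (s ^ p + Y_p)⁻¹` is a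
contraction, and a bounded ratio of exponential sums converges: compare the leading terms.
-/

section SmoothedStep

open MeasureTheory

lemma inv_one_add_rpow_le {t p : ℝ} (ht : 0 ≤ t) (hp : 2 ≤ p) :
    (1 + t ^ p)⁻¹ ≤ 2 * (1 + t ^ 2)⁻¹ := by
  have htp : 0 ≤ t ^ p := Real.rpow_nonneg ht p
  rw [inv_le_comm₀ (by positivity) (by positivity), mul_inv, inv_inv]
  rcases le_total t 1 with ht1 | ht1
  · nlinarith
  · have h_mono : t ^ 2 ≤ t ^ p := by
      simpa using Real.rpow_le_rpow_of_exponent_le ht1 hp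
    nlinarith

lemma div_rpow_add_eq {s z : ℝ} (hs : 0 < s) (hz : 0 < z) (p : ℝ) :
    z ^ p / (s ^ p + z ^ p) = (1 + (s / z) ^ p)⁻¹ := by
  have := Real.rpow_pos_of_pos hs p
  have := Real.rpow_pos_of_pos hz p
  rw [Real.div_rpow hs.le hz.le]
  field_simp
  ring

lemma div_rpow_add_le {x s p M : ℝ} (hx : 0 ≤ x) (hs : 0 < s) (hp : 2 ≤ p) (hM : 0 < M)
    (hxM : x ≤ M ^ p) : x / (s ^ p + x) ≤ 2 * (1 + (s / M) ^ 2)⁻¹ := by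
  have hsp := Real.rpow_pos_of_pos hs p
  calc x / (s ^ p + x) ≤ M ^ p / (s ^ p + M ^ p) := by
        rw [div_le_div_iff₀ (by positivity) (by positivity)]
        nlinarith
    _ = (1 + (s / M) ^ p)⁻¹ := div_rpow_add_eq hs hM p
    _ ≤ 2 * (1 + (s / M) ^ 2)⁻¹ := inv_one_add_rpow_le (by positivity) hp

-- For `p ≤ 1` the integral of `(1 + t ^ p)⁻¹` diverges, and both sides are `0`.
lemma integral_div_rpow_add {x p : ℝ} (hx : 0 ≤ x) (hp : p ≠ 0) :
    ∫ s in Set.Ioi 0, x / (s ^ p + x) =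
      (∫ t in Set.Ioi (0 : ℝ), (1 + t ^ p)⁻¹) * x ^ (1 / p) := by
  rcases hx.eq_or_lt with rfl | hx
  · simp [Real.zero_rpow (inv_ne_zero hp)]
  have hz : 0 < x ^ (1 / p) := Real.rpow_pos_of_pos hx _
  have hzp : (x ^ (1 / p)) ^ p = x := by
    rw [← Real.rpow_mul hx.le, one_div_mul_cancel hp, Real.rpow_one]
  calc ∫ s in Set.Ioi 0, x / (s ^ p + x)
      = ∫ s in Set.Ioi 0, (1 + ((x ^ (1 / p))⁻¹ * s) ^ p)⁻¹ := by
        refine setIntegral_congr_fun measurableSet_Ioi fun s hs ↦ ?_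
        have h_eq := div_rpow_add_eq (Set.mem_Ioi.mp hs) hz p
        rwa [hzp, div_eq_inv_mul s] at h_eq
    _ = _ := by
        rw [integral_comp_mul_left_Ioi (fun t : ℝ ↦ (1 + t ^ p)⁻¹) 0 (inv_pos.mpr hz)]
        simp [mul_comm]

lemma tendsto_inv_one_add_rpow {t : ℝ} (ht : 0 < t) (ht1 : t ≠ 1) :
    Tendsto (fun p : ℝ ↦ (1 + t ^ p)⁻¹) atTop (𝓝 ((Set.Ioc 0 1).indicator 1 t)) := by
  rcases ht1.lt_or_gt with h_lt | h_gt
  · have h_zero := tendsto_rpow_atTop_of_base_lt_one t (by linarith) h_lt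
    simpa [Set.indicator, ht, h_lt.le] using (h_zero.const_add 1).inv₀ (by norm_num)
  · have h_top := tendsto_atTop_add_const_left atTop 1 (tendsto_rpow_atTop_of_base_gt_one t h_gt)
    simpa [Set.indicator, h_gt.not_ge, Pi.inv_def] using h_top.inv_tendsto_atTop

lemma tendsto_integral_inv_one_add_rpow :
    Tendsto (fun p : ℝ ↦ ∫ t in Set.Ioi (0 : ℝ), (1 + t ^ p)⁻¹) atTop (𝓝 1) := by
  have h_indicator : ∫ t in Set.Ioi (0 : ℝ), (Set.Ioc 0 1).indicator (1 : ℝ → ℝ) t = 1 := by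
    rw [setIntegral_indicator measurableSet_Ioc, Set.inter_eq_right.mpr Set.Ioc_subset_Ioi_self]
    simp
  suffices h : Tendsto (fun p : ℝ ↦ ∫ t in Set.Ioi (0 : ℝ), (1 + t ^ p)⁻¹) atTop
      (𝓝 (∫ t in Set.Ioi (0 : ℝ), (Set.Ioc 0 1).indicator (1 : ℝ → ℝ) t)) by
    rwa [h_indicator] at h
  refine tendsto_integral_filter_of_dominated_convergence (fun t ↦ 2 * (1 + t ^ 2)⁻¹) ?_ ?_
    (integrable_inv_one_add_sq.const_mul 2).restrict ?_
  · exact .of_forall fun p ↦ by fun_prop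
  · filter_upwards [eventually_ge_atTop 2] with p hp
    filter_upwards [ae_restrict_mem measurableSet_Ioi] with t ht
    have := Real.rpow_pos_of_pos (Set.mem_Ioi.mp ht) p
    rw [Real.norm_of_nonneg (by positivity)]
    exact inv_one_add_rpow_le (Set.mem_Ioi.mp ht).le hp
  · filter_upwards [ae_restrict_mem measurableSet_Ioi, Measure.ae_ne _ 1] with t ht ht1
    exact tendsto_inv_one_add_rpow ht ht1

end SmoothedStep

section CStarAlgebra

open MeasureTheory

lemma exists_pos_le_rpow (y : ℝ) {p : ℝ} (hp : p ≠ 0) : ∃ M : ℝ, 0 < M ∧ y ≤ M ^ p :=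
  ⟨max y 1 ^ p⁻¹, by positivity, by
    rw [Real.rpow_inv_rpow (by positivity) hp]
    exact le_max_left y 1⟩

lemma integrable_two_mul_inv_one_add_div_sq {M : ℝ} (hM : M ≠ 0) :
    Integrable fun s : ℝ ↦ 2 * (1 + (s / M) ^ 2)⁻¹ :=
  (integrable_inv_one_add_sq.comp_div hM).const_mul 2

variable {A : Type*} [CStarAlgebra A]

/-- The positive contraction `a (t + a)⁻¹`, for `0 ≤ a` and `0 < t`: a smoothed version of the
spectral projection of `a` onto `(t, ∞)`, given by the functional calculus so that no invertibility
has to be carried along. -/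
noncomputable def softSpectralProj (t : ℝ) (a : A) : A :=
  cfc (fun x : ℝ ↦ x / (t + x)) a

variable [PartialOrder A] [StarOrderedRing A] {a : A}

lemma continuousOn_div_add_spectrum {t : ℝ} (ht : 0 < t) (ha : 0 ≤ a) :
    ContinuousOn (fun x : ℝ ↦ x / (t + x)) (spectrum ℝ a) :=
  continuousOn_id.div (by fun_prop) fun _ hx ↦
    (add_pos_of_pos_of_nonneg ht (spectrum_nonneg_of_nonneg ha hx)).ne'

lemma isUnit_algebraMap_add {t : ℝ} (ht : 0 < t) (ha : 0 ≤ a) : IsUnit (algebraMap ℝ A t + a) := by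
  have h_notMem : -t ∉ spectrum ℝ a := fun h ↦ by linarith [spectrum_nonneg_of_nonneg ha h]
  rw [spectrum.notMem_iff, map_neg, ← neg_add'] at h_notMem
  exact (IsUnit.neg_iff _).mp h_notMem

lemma algebraMap_add_mul_softSpectralProj {t : ℝ} (ht : 0 < t) (ha : 0 ≤ a) :
    (algebraMap ℝ A t + a) * softSpectralProj t a = a := by
  have h_cont := continuousOn_div_add_spectrum ht ha
  have h_shift : algebraMap ℝ A t + a = cfc (fun x : ℝ ↦ t + x) a := by
    rw [cfc_const_add t (fun x ↦ x) a, cfc_id' ℝ a]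
  rw [h_shift, softSpectralProj, ← cfc_mul (fun x : ℝ ↦ t + x) _ a]
  conv_rhs => rw [← cfc_id' ℝ a]
  refine cfc_congr fun x hx ↦ mul_div_cancel₀ _ ?_
  exact (add_pos_of_pos_of_nonneg ht (spectrum_nonneg_of_nonneg ha hx)).ne'

lemma norm_softSpectralProj_le_one {t : ℝ} (ht : 0 < t) (ha : 0 ≤ a) :
    ‖softSpectralProj t a‖ ≤ 1 := by
  refine norm_cfc_le zero_le_one fun x hx ↦ ?_
  have hx0 := spectrum_nonneg_of_nonneg ha hx
  rw [Real.norm_of_nonneg (by positivity), div_le_one (by positivity)]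
  linarith

lemma norm_div_rpow_add_le_of_mem_spectrum {s p M x : ℝ} (ha : 0 ≤ a) (hs : 0 < s) (hp : 2 ≤ p)
    (hM : 0 < M) (haM : ‖a‖ ≤ M ^ p) (hx : x ∈ spectrum ℝ a) :
    ‖x / (s ^ p + x)‖ ≤ 2 * (1 + (s / M) ^ 2)⁻¹ := by
  have hx0 := spectrum_nonneg_of_nonneg ha hx
  have hxa : x ≤ ‖a‖ := by
    simpa [cfc_id ℝ a] using (Real.le_norm_self x).trans (norm_apply_le_norm_cfc id a hx)
  have := Real.rpow_pos_of_pos hs p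
  rw [Real.norm_of_nonneg (by positivity)]
  exact div_rpow_add_le hx0 hs hp hM (hxa.trans haM)

lemma continuousOn_uncurry_div_rpow_add {p : ℝ} (ha : 0 ≤ a) :
    ContinuousOn (Function.uncurry fun s x : ℝ ↦ x / (s ^ p + x))
      (Set.Ioi 0 ×ˢ spectrum ℝ a) := by
  refine continuousOn_snd.div ((continuousOn_fst.rpow_const ?_).add continuousOn_snd) ?_
  · exact fun y hy ↦ .inl (Set.mem_Ioi.mp hy.1).ne'
  · intro y hy
    exact (add_pos_of_pos_of_nonneg (Real.rpow_pos_of_pos hy.1 p)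
      (spectrum_nonneg_of_nonneg ha hy.2)).ne'

lemma integrableOn_softSpectralProj_rpow {p : ℝ} (ha : 0 ≤ a) (hp : 2 ≤ p) :
    IntegrableOn (fun s : ℝ ↦ softSpectralProj (s ^ p) a) (Set.Ioi 0) := by
  obtain ⟨M, hM, haM⟩ := exists_pos_le_rpow ‖a‖ (p := p) (by linarith)
  refine integrableOn_cfc measurableSet_Ioi _ _ a (continuousOn_uncurry_div_rpow_add ha) ?_
    (integrable_two_mul_inv_one_add_div_sq hM.ne').restrict.2
  filter_upwards [ae_restrict_mem measurableSet_Ioi] with s hs x hx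
  exact norm_div_rpow_add_le_of_mem_spectrum ha hs hp hM haM hx

lemma integral_softSpectralProj_rpow {p : ℝ} (ha : 0 ≤ a) (hp : 2 ≤ p) :
    ∫ s in Set.Ioi (0 : ℝ), softSpectralProj (s ^ p) a =
      (∫ t in Set.Ioi (0 : ℝ), (1 + t ^ p)⁻¹) • a ^ (1 / p) := by
  obtain ⟨M, hM, haM⟩ := exists_pos_le_rpow ‖a‖ (p := p) (by linarith)
  have h_bound : ∀ᵐ s ∂(volume.restrict (Set.Ioi (0 : ℝ))), ∀ x ∈ spectrum ℝ a,
      ‖x / (s ^ p + x)‖ ≤ 2 * (1 + (s / M) ^ 2)⁻¹ := by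
    filter_upwards [ae_restrict_mem measurableSet_Ioi] with s hs x hx
    exact norm_div_rpow_add_le_of_mem_spectrum ha hs hp hM haM hx
  have hp0 : p ≠ 0 := by linarith
  have h_cont : ContinuousOn (fun x : ℝ ↦ x ^ (1 / p)) (spectrum ℝ a) :=
    continuousOn_id.rpow_const fun _ _ ↦ .inr (by positivity)
  calc ∫ s in Set.Ioi (0 : ℝ), softSpectralProj (s ^ p) a
      = cfc (fun x ↦ ∫ s in Set.Ioi (0 : ℝ), x / (s ^ p + x)) a :=
        (cfc_setIntegral measurableSet_Ioi _ _ a (continuousOn_uncurry_div_rpow_add ha) h_bound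
          (integrable_two_mul_inv_one_add_div_sq hM.ne').restrict.2).symm
    _ = cfc (fun x ↦ (∫ t in Set.Ioi (0 : ℝ), (1 + t ^ p)⁻¹) • x ^ (1 / p)) a :=
        cfc_congr fun x hx ↦ integral_div_rpow_add (spectrum_nonneg_of_nonneg ha hx) hp0
    _ = _ := by rw [cfc_smul _ _ a h_cont, CFC.rpow_eq_cfc_real ha]

lemma norm_softSpectralProj_rpow_le {s p M : ℝ} (ha : 0 ≤ a) (hs : 0 < s) (hp : 2 ≤ p)
    (hM : 0 < M) (haM : ‖a‖ ≤ M ^ p) :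
    ‖softSpectralProj (s ^ p) a‖ ≤ 2 * (1 + (s / M) ^ 2)⁻¹ :=
  norm_cfc_le (by positivity) fun _ hx ↦ norm_div_rpow_add_le_of_mem_spectrum ha hs hp hM haM hx

theorem tendsto_rpow_one_div_of_tendsto_softSpectralProj {a : ℝ → A} {M : ℝ} {P : ℝ → A}
    (ha : ∀ p, 0 ≤ a p) (hM : 0 < M) (haM : ∀ᶠ p in atTop, ‖a p‖ ≤ M ^ p)
    (hP : ∀ s > 0, Tendsto (fun p ↦ softSpectralProj (s ^ p) (a p)) atTop (𝓝 (P s))) :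
    Tendsto (fun p ↦ a p ^ (1 / p)) atTop (𝓝 (∫ s in Set.Ioi 0, P s)) := by
  have h_integral : Tendsto (fun p ↦ ∫ s in Set.Ioi (0 : ℝ), softSpectralProj (s ^ p) (a p)) atTop
      (𝓝 (∫ s in Set.Ioi 0, P s)) := by
    refine tendsto_integral_filter_of_dominated_convergence _ ?_ ?_
      (integrable_two_mul_inv_one_add_div_sq hM.ne').restrict ?_
    · filter_upwards [eventually_ge_atTop 2] with p hp
      exact (integrableOn_softSpectralProj_rpow (ha p) hp).aestronglyMeasurable
    · filter_upwards [eventually_ge_atTop 2, haM] with p hp hpM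
      filter_upwards [ae_restrict_mem measurableSet_Ioi] with s hs
      exact norm_softSpectralProj_rpow_le (ha p) hs hp hM hpM
    · filter_upwards [ae_restrict_mem measurableSet_Ioi] with s hs
      exact hP s hs
  have h_limit := (tendsto_integral_inv_one_add_rpow.inv₀ one_ne_zero).smul h_integral
  rw [inv_one, one_smul] at h_limit
  refine h_limit.congr' ?_
  filter_upwards [eventually_ge_atTop 2,
    tendsto_integral_inv_one_add_rpow.eventually_ne one_ne_zero] with p hp h_ne
  rw [integral_softSpectralProj_rpow (ha p) hp, inv_smul_smul₀ h_ne]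

end CStarAlgebra

section ExpSum

open NNReal Asymptotics

/-- Exponential sums `∑ c_b b ^ p` with complex coefficients and finitely many bases `b ≥ 0`, as
functions of the exponent `p`. Keeping the formal sum makes them a commutative ring, over which
determinants and adjugates of matrices can be formed. -/
abbrev ExpSum : Type := MonoidAlgebra ℂ ℝ≥0

namespace ExpSum

/-- The value of an exponential sum at the exponent `p`. At `p = 0` the base `0` contributes
its coefficient, by the convention `0 ^ 0 = 1`. -/
noncomputable def eval (p : ℝ) : ExpSum →ₐ[ℂ] ℂ :=
  MonoidAlgebra.lift ℂ ℂ ℝ≥0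
    { toFun b := ((b : ℝ) ^ p : ℝ)
      map_one' := by simp
      map_mul' b c := by simp [Real.mul_rpow] }

@[simp]
lemma eval_single (p : ℝ) (b : ℝ≥0) (c : ℂ) :
    eval p (MonoidAlgebra.single b c) = c * ((b : ℝ) ^ p : ℝ) := by
  simp [eval]

lemma eval_eq_sum (f : ExpSum) (p : ℝ) :
    eval p f = ∑ b ∈ f.coeff.support, f.coeff b * ((b : ℝ) ^ p : ℝ) := by
  simp [eval, MonoidAlgebra.lift_apply, Finsupp.sum]

lemma tendsto_rpow_div_rpow {b B : ℝ≥0} (h : b < B) :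
    Tendsto (fun p : ℝ ↦ (b : ℝ) ^ p / (B : ℝ) ^ p) atTop (𝓝 0) := by
  have hB : (0 : ℝ) < B := by exact_mod_cast h.pos
  have h_ratio : (b : ℝ) / B < 1 := (div_lt_one hB).mpr (by exact_mod_cast h)
  simpa only [Real.div_rpow b.coe_nonneg B.coe_nonneg] using
    tendsto_rpow_atTop_of_base_lt_one _ (neg_one_lt_zero.trans_le (by positivity)) h_ratio

lemma tendsto_eval_div_rpow (f : ExpSum) {B : ℝ≥0} (hB : 0 < B)
    (h_le : ∀ b ∈ f.coeff.support, b ≤ B) :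
    Tendsto (fun p ↦ eval p f / ((B : ℝ) ^ p : ℝ)) atTop (𝓝 (f.coeff B)) := by
  classical
  have h_terms : Tendsto
      (fun p : ℝ ↦ ∑ b ∈ f.coeff.support, f.coeff b * ((b : ℝ) ^ p / (B : ℝ) ^ p : ℝ)) atTop
      (𝓝 (∑ b ∈ f.coeff.support, f.coeff b * ((if b = B then 1 else 0 : ℝ) : ℂ))) := by
    refine tendsto_finsetSum _ fun b hb ↦ .const_mul _ (.ofReal ?_)
    split_ifs with hbB
    · have hBp (p : ℝ) : (B : ℝ) ^ p ≠ 0 := by positivity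
      simp [hbB, hBp]
    · exact tendsto_rpow_div_rpow ((h_le b hb).lt_of_ne hbB)
  have h_coeff : ∑ b ∈ f.coeff.support, f.coeff b * ((if b = B then 1 else 0 : ℝ) : ℂ) =
      f.coeff B := by
    rw [Finset.sum_eq_single B (fun b _ hb ↦ by simp [hb])
      fun hB ↦ by simp [Finsupp.notMem_support_iff.mp hB]]
    simp
  rw [h_coeff] at h_terms
  refine h_terms.congr fun p ↦ ?_
  rw [eval_eq_sum, Finset.sum_div]
  exact Finset.sum_congr rfl fun b _ ↦ by push_cast; ring

lemma eventually_isBigO_eval (f : ExpSum) :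
    ∀ᶠ B : ℝ≥0 in atTop, (eval · f) =O[atTop] fun p : ℝ ↦ (B : ℝ) ^ p := by
  filter_upwards [eventually_gt_atTop 0, eventually_ge_atTop (f.coeff.support.sup id)] with B hB h
  have h_le (b : ℝ≥0) (hb : b ∈ f.coeff.support) : b ≤ B := (Finset.le_sup (f := id) hb).trans h
  have h_bigO := isBigO_of_div_tendsto_nhds
    (.of_forall fun p h ↦ absurd h (Complex.ofReal_ne_zero.mpr (by positivity))) _
    (f.tendsto_eval_div_rpow hB h_le)
  exact h_bigO.trans (.of_norm_right (by simpa using isBigO_refl _ _))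

lemma eventually_eval_eq_zero_or_exists_tendsto (f : ExpSum) :
    (∀ᶠ p in atTop, eval p f = 0) ∨
      ∃ B : ℝ≥0, 0 < B ∧ ∃ c : ℂ, c ≠ 0 ∧
        Tendsto (fun p ↦ eval p f / ((B : ℝ) ^ p : ℝ)) atTop (𝓝 c) := by
  have h_le (b : ℝ≥0) (hb : b ∈ f.coeff.support) : b ≤ f.coeff.support.sup id :=
    Finset.le_sup (f := id) hb
  rcases (zero_le : 0 ≤ f.coeff.support.sup id).eq_or_lt with h_zero | h_pos
  · left
    filter_upwards [eventually_ne_atTop 0] with p hp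
    rw [eval_eq_sum]
    refine Finset.sum_eq_zero fun b hb ↦ ?_
    have hb0 : b = 0 := le_zero_iff.mp (h_zero ▸ h_le b hb)
    simp [hb0, Real.zero_rpow hp]
  · right
    have h_nonempty : f.coeff.support.Nonempty := by
      by_contra! h_empty
      simp [h_empty] at h_pos
    obtain ⟨B, hB, h_sup⟩ := Finset.exists_mem_eq_sup _ h_nonempty id
    rw [h_sup] at h_le h_pos
    exact ⟨B, h_pos, f.coeff B, Finsupp.mem_support_iff.mp hB, f.tendsto_eval_div_rpow h_pos h_le⟩

lemma isTheta_of_tendsto_div_rpow {u : ℝ → ℂ} {B : ℝ≥0} {c : ℂ} (hc : c ≠ 0)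
    (h : Tendsto (fun p ↦ u p / ((B : ℝ) ^ p : ℝ)) atTop (𝓝 c)) :
    u =Θ[atTop] fun p ↦ (B : ℝ) ^ p :=
  (isTheta_of_div_tendsto_nhds_ne_zero h hc).symm.trans
    (.of_norm_eventuallyEq_norm (by simp))

theorem exists_tendsto_eval_div_of_isBigO {f g : ExpSum}
    (hfg : (eval · f) =O[atTop] (eval · g)) :
    ∃ z, Tendsto (fun p ↦ eval p f / eval p g) atTop (𝓝 z) := by
  rcases f.eventually_eval_eq_zero_or_exists_tendsto with hf | ⟨B, hB, c, hc, hf⟩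
  · exact ⟨0, tendsto_const_nhds.congr' (hf.mono fun p hp ↦ by simp [hp])⟩
  rcases g.eventually_eval_eq_zero_or_exists_tendsto with hg | ⟨B', hB', c', hc', hg⟩
  · exact ⟨0, tendsto_const_nhds.congr' (hg.mono fun p hp ↦ by simp [hp])⟩
  have h_factor (p : ℝ) : (eval p f / ((B : ℝ) ^ p : ℝ)) / (eval p g / ((B' : ℝ) ^ p : ℝ)) *
      ((B : ℝ) ^ p / (B' : ℝ) ^ p : ℝ) = eval p f / eval p g := by
    have hBp : (((B : ℝ) ^ p : ℝ) : ℂ) ≠ 0 := Complex.ofReal_ne_zero.mpr (by positivity)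
    have hBp' : (((B' : ℝ) ^ p : ℝ) : ℂ) ≠ 0 := Complex.ofReal_ne_zero.mpr (by positivity)
    push_cast
    field_simp
  obtain ⟨r, hr⟩ : ∃ r : ℝ, Tendsto (fun p : ℝ ↦ (B : ℝ) ^ p / (B' : ℝ) ^ p) atTop (𝓝 r) := by
    rcases lt_trichotomy B B' with h_lt | rfl | h_gt
    · exact ⟨0, tendsto_rpow_div_rpow h_lt⟩
    · exact ⟨1, tendsto_const_nhds.congr fun p ↦ (div_self (by positivity)).symm⟩
    · have h_bigO : (fun p : ℝ ↦ (B : ℝ) ^ p) =O[atTop] fun p ↦ (B' : ℝ) ^ p :=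
        (isTheta_of_tendsto_div_rpow hc hf).symm.isBigO.trans
          (hfg.trans (isTheta_of_tendsto_div_rpow hc' hg).isBigO)
      have h_littleO : (fun p : ℝ ↦ (B' : ℝ) ^ p) =o[atTop] fun p ↦ (B : ℝ) ^ p :=
        (isLittleO_iff_tendsto fun p h ↦ absurd h (by positivity)).mpr
          (tendsto_rpow_div_rpow h_gt)
      refine (isLittleO_irrefl' ?_ (h_bigO.trans_isLittleO h_littleO)).elim
      exact Frequently.of_forall fun p ↦ norm_ne_zero_iff.mpr (by positivity)
  exact ⟨_, ((hf.div hg hc').mul hr.ofReal).congr h_factor⟩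

end ExpSum

end ExpSum

section Matrix

open scoped Matrix.Norms.L2Operator MatrixOrder

variable {n : Type*} [Fintype n] [DecidableEq n]

lemma det_smul_softSpectralProj {Y : Matrix n n ℂ} (hY : 0 ≤ Y) {t : ℝ} (ht : 0 < t) :
    (algebraMap ℝ (Matrix n n ℂ) t + Y).det • softSpectralProj t Y =
      (algebraMap ℝ (Matrix n n ℂ) t + Y).adjugate * Y := by
  have h := congrArg ((algebraMap ℝ (Matrix n n ℂ) t + Y).adjugate * ·)
    (algebraMap_add_mul_softSpectralProj ht hY)
  simpa only [← mul_assoc, adjugate_mul, smul_mul_assoc, one_mul] using h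

lemma mapMatrix_map_algebraMap {R B : Type*} [CommSemiring R] [Semiring B] [Algebra R B]
    (f : B →ₐ[R] R) (M : Matrix n n R) : f.mapMatrix (M.map (algebraMap R B)) = M := by
  ext i j
  exact f.commutes (M i j)

lemma posSemidef_list_prod_mul_mul_reverse_prod {R : Type*} [Ring R] [PartialOrder R]
    [StarRing R] {L : List (Matrix n n R)} (hL : ∀ B ∈ L, B.IsHermitian)
    {M : Matrix n n R} (hM : M.PosSemidef) : (L.prod * M * L.reverse.prod).PosSemidef := by
  have h_reverse : L.reverse.prod = L.prodᴴ := by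
    rw [conjTranspose_list_prod, List.map_congr_left hL, List.map_id']
  rw [h_reverse]
  exact hM.mul_mul_conjTranspose_same L.prod

lemma psdPow_eq_rpow {d : ℕ} {A : Matrix (Fin d) (Fin d) ℂ} (hA : A.PosSemidef) (r : ℝ) :
    psdPow A r = A ^ r := by
  rw [psdPow, dif_pos hA.isHermitian, CFC.rpow_eq_cfc_real (nonneg_iff_posSemidef.mpr hA),
    hA.isHermitian.cfc_eq, IsHermitian.cfc, Unitary.conjStarAlgAut_apply]
  rfl

lemma posSemidef_psdPow {d : ℕ} {A : Matrix (Fin d) (Fin d) ℂ} (hA : A.PosSemidef) (r : ℝ) :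
    (psdPow A r).PosSemidef := by
  rw [psdPow_eq_rpow hA]
  exact nonneg_iff_posSemidef.mp CFC.rpow_nonneg

end Matrix

section MatrixExpSum

open NNReal Asymptotics
open scoped Matrix.Norms.L2Operator MatrixOrder

lemma exists_eventually_norm_le_rpow {E : Type*} [Norm E] {u : ℝ → E} {B : ℝ} (hB : 0 < B)
    (h : u =O[atTop] fun p ↦ B ^ p) : ∃ M : ℝ, 0 < M ∧ ∀ᶠ p in atTop, ‖u p‖ ≤ M ^ p := by
  obtain ⟨C, hC⟩ := h.bound
  refine ⟨max C 1 * B, by positivity, ?_⟩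
  filter_upwards [hC, eventually_ge_atTop 1] with p hp hp1
  have hC_le : C ≤ max C 1 ^ p :=
    (le_max_left C 1).trans (Real.self_le_rpow_of_one_le (le_max_right C 1) hp1)
  calc ‖u p‖ ≤ C * B ^ p := by rwa [Real.norm_of_nonneg (by positivity)] at hp
    _ ≤ max C 1 ^ p * B ^ p := by gcongr
    _ = (max C 1 * B) ^ p := (Real.mul_rpow (by positivity) hB.le).symm

namespace ExpSum

variable {n : Type*} [Fintype n] [DecidableEq n]

lemma exists_eventually_norm_mapMatrix_eval_le (𝓨 : Matrix n n ExpSum) :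
    ∃ M : ℝ, 0 < M ∧ ∀ᶠ p in atTop, ‖(eval p).mapMatrix 𝓨‖ ≤ M ^ p := by
  obtain ⟨B, h_entry, hB⟩ := ((eventually_all.mpr fun i ↦ eventually_all.mpr fun j ↦
    (𝓨 i j).eventually_isBigO_eval).and (eventually_gt_atTop 0)).exists
  refine exists_eventually_norm_le_rpow (B := B) hB ?_
  have h_sum (p : ℝ) : ∑ i, ∑ j, single i j (eval p (𝓨 i j)) = (eval p).mapMatrix 𝓨 :=
    (matrix_eq_sum_single _).symm
  simp only [← h_sum]
  have h_single (i j : n) : (fun p : ℝ ↦ single i j (eval p (𝓨 i j))) =O[atTop]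
      fun p ↦ (B : ℝ) ^ p :=
    ((singleLinearMap ℂ i j : ℂ →ₗ[ℂ] Matrix n n ℂ).toContinuousLinearMap.isBigO_comp
      (eval · (𝓨 i j)) _).trans (h_entry i j)
  exact .fun_sum fun i _ ↦ .fun_sum fun j _ ↦ h_single i j

lemma mapMatrix_eval_scalar_single_add (𝓨 : Matrix n n ExpSum) (s : ℝ≥0) (p : ℝ) :
    (eval p).mapMatrix (scalar n (MonoidAlgebra.single s 1) + 𝓨) =
      algebraMap ℝ (Matrix n n ℂ) ((s : ℝ) ^ p) + (eval p).mapMatrix 𝓨 := by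
  rw [map_add, add_left_inj]
  ext i j
  rcases eq_or_ne i j with rfl | hij
  · simp [algebraMap_matrix_apply]
  · simp [algebraMap_matrix_apply, hij]

lemma exists_tendsto_softSpectralProj_mapMatrix_eval {𝓨 : Matrix n n ExpSum}
    (h𝓨 : ∀ p, 0 ≤ (eval p).mapMatrix 𝓨) {s : ℝ≥0} (hs : 0 < s) :
    ∃ P, Tendsto (fun p : ℝ ↦ softSpectralProj ((s : ℝ) ^ p) ((eval p).mapMatrix 𝓨)) atTop
      (𝓝 P) := by
  set 𝓦 : Matrix n n ExpSum := scalar n (MonoidAlgebra.single s 1) + 𝓨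
  have h_pos (p : ℝ) : 0 < (s : ℝ) ^ p := by positivity
  have h𝓦 (p : ℝ) := mapMatrix_eval_scalar_single_add 𝓨 s p
  have h_det (p : ℝ) : eval p 𝓦.det ≠ 0 := by
    rw [AlgHom.map_det, h𝓦]
    exact ((isUnit_iff_isUnit_det _).mp (isUnit_algebraMap_add (h_pos p) (h𝓨 p))).ne_zero
  have h_mul (i j : n) (p : ℝ) :
      softSpectralProj ((s : ℝ) ^ p) ((eval p).mapMatrix 𝓨) i j * eval p 𝓦.det =
        eval p ((𝓦.adjugate * 𝓨) i j) := by
    have h := congrFun₂ (det_smul_softSpectralProj (h𝓨 p) (h_pos p)) i j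
    rw [← h𝓦, ← AlgHom.map_adjugate, ← map_mul, ← AlgHom.map_det] at h
    rw [mul_comm]
    exact h
  have h_bounded (i j : n) : (eval · ((𝓦.adjugate * 𝓨) i j)) =O[atTop]
      (eval · 𝓦.det) := by
    have h_proj : (fun p : ℝ ↦ softSpectralProj ((s : ℝ) ^ p) ((eval p).mapMatrix 𝓨) i j)
        =O[atTop] fun _ ↦ (1 : ℂ) :=
      ((entryLinearMap ℂ ℂ i j).toContinuousLinearMap.isBigO_comp
        (fun p : ℝ ↦ softSpectralProj ((s : ℝ) ^ p) ((eval p).mapMatrix 𝓨)) _).trans <|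
        .of_bound 1 <| .of_forall fun p ↦ by
          rw [norm_one, mul_one]
          exact norm_softSpectralProj_le_one (h_pos p) (h𝓨 p)
    simpa only [h_mul, one_mul] using h_proj.mul (isBigO_refl (eval · 𝓦.det) atTop)
  choose P hP using fun i j ↦ exists_tendsto_eval_div_of_isBigO (h_bounded i j)
  refine ⟨of P, tendsto_pi_nhds.mpr fun i ↦ tendsto_pi_nhds.mpr fun j ↦ ?_⟩
  simpa only [← h_mul, mul_div_cancel_right₀ _ (h_det _), of_apply] using hP i j

theorem exists_tendsto_mapMatrix_eval_rpow {𝓨 : Matrix n n ExpSum}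
    (h𝓨 : ∀ p, 0 ≤ (eval p).mapMatrix 𝓨) :
    ∃ Z, Tendsto (fun p ↦ (eval p).mapMatrix 𝓨 ^ (1 / p)) atTop (𝓝 Z) := by
  obtain ⟨M, hM, h_norm⟩ := exists_eventually_norm_mapMatrix_eval_le 𝓨
  choose! P hP using fun (s : ℝ) (hs : 0 < s) ↦
    exists_tendsto_softSpectralProj_mapMatrix_eval h𝓨 (s := ⟨s, hs.le⟩) hs
  exact ⟨_, tendsto_rpow_one_div_of_tendsto_softSpectralProj h𝓨 hM h_norm hP⟩

lemma exists_mapMatrix_eval_eq_rpow {A : Matrix n n ℂ} (hA : 0 ≤ A) (r : ℝ) :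
    ∃ 𝓐 : Matrix n n ExpSum, ∀ p, (eval p).mapMatrix 𝓐 = A ^ (r * p) := by
  have hA' : A.PosSemidef := nonneg_iff_posSemidef.mp hA
  let U : Matrix n n ℂ := hA'.isHermitian.eigenvectorUnitary.val
  refine ⟨U.map (algebraMap ℂ ExpSum) *
    diagonal (fun i ↦ MonoidAlgebra.single ((hA'.isHermitian.eigenvalues i).toNNReal ^ r) 1) *
    (star U).map (algebraMap ℂ ExpSum), fun p ↦ ?_⟩
  rw [map_mul, map_mul, mapMatrix_map_algebraMap, mapMatrix_map_algebraMap,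
    CFC.rpow_eq_cfc_real hA, hA'.isHermitian.cfc_eq, IsHermitian.cfc,
    Unitary.conjStarAlgAut_apply]
  congr 2
  ext i j
  rcases eq_or_ne i j with rfl | hij
  · have h_nonneg := hA'.eigenvalues_nonneg i
    simp [Real.rpow_mul h_nonneg, h_nonneg]
  · simp [hij]

variable {d : ℕ}

lemma exists_mapMatrix_eval_eq_psdPow {A : Matrix (Fin d) (Fin d) ℂ} (hA : A.PosSemidef) (r : ℝ) :
    ∃ 𝓐 : Matrix (Fin d) (Fin d) ExpSum, ∀ p, (eval p).mapMatrix 𝓐 = psdPow A (r * p) := by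
  simpa only [psdPow_eq_rpow hA] using
    exists_mapMatrix_eval_eq_rpow (nonneg_iff_posSemidef.mpr hA) r

theorem exists_tendsto_psdPow_mapMatrix_eval {𝓨 : Matrix (Fin d) (Fin d) ExpSum}
    (h𝓨 : ∀ p, ((eval p).mapMatrix 𝓨).PosSemidef) :
    ∃ Z, Tendsto (fun p ↦ psdPow ((eval p).mapMatrix 𝓨) (1 / p)) atTop (𝓝 Z) := by
  simpa only [psdPow_eq_rpow (h𝓨 _)] using
    exists_tendsto_mapMatrix_eval_rpow fun p ↦ nonneg_iff_posSemidef.mpr (h𝓨 p)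

end ExpSum

end MatrixExpSum

/-- For `n + 1` positive semidefinite matrices, the matrix
`Z_p = (A_0^{p/2} ⋯ A_{n-1}^{p/2} A_n^p A_{n-1}^{p/2} ⋯ A_0^{p/2})^{1/p}` converges as
`p → ∞`. -/
theorem anti_lie_trotter_multi_limit_exists
    {d n : ℕ} (A : Fin (n + 1) → Matrix (Fin d) (Fin d) ℂ)
    (hA : ∀ l, (A l).PosSemidef) :
    ∃ Z : Matrix (Fin d) (Fin d) ℂ,
      Tendsto (fun p : ℝ => ZmatM A p) atTop (𝓝 Z) := by
  choose 𝓗 h𝓗 using fun l ↦ ExpSum.exists_mapMatrix_eval_eq_psdPow (hA l) (1 / 2)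
  obtain ⟨𝓛, h𝓛⟩ := ExpSum.exists_mapMatrix_eval_eq_psdPow (hA (Fin.last n)) 1
  set 𝓕 := List.ofFn fun l : Fin n ↦ 𝓗 l.castSucc
  have h_factors (p : ℝ) : 𝓕.map (ExpSum.eval p).mapMatrix =
      List.ofFn fun l : Fin n ↦ psdPow (A l.castSucc) (p / 2) := by
    simp only [𝓕, List.map_ofFn, Function.comp_def, h𝓗, one_div_mul_eq_div]
  have h_eval (p : ℝ) : psdPow ((ExpSum.eval p).mapMatrix (𝓕.prod * 𝓛 * 𝓕.reverse.prod)) (1 / p) =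
      ZmatM A p := by
    simp only [ZmatM, map_mul, map_list_prod, List.map_reverse, h_factors, h𝓛, one_mul]
  simp only [← h_eval]
  refine ExpSum.exists_tendsto_psdPow_mapMatrix_eval fun p ↦ ?_
  simp only [map_mul, map_list_prod, List.map_reverse, h_factors, h𝓛]
  refine posSemidef_list_prod_mul_mul_reverse_prod ?_ (posSemidef_psdPow (hA _) _)
  exact List.forall_mem_ofFn_iff.mpr fun l ↦ (posSemidef_psdPow (hA _) _).isHermitian
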